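/- Let k ∈ [0,1) and let S be a weakly regular AG-groupoid with a left identity e. Then the following conditions are equivalent: (i) S is both regular and intra-regular; (ii) f ∘_k f = f_k for every (∈,∈∨q_k)-fuzzy quasi-ideal f of S; (iii) f ∘_k f = f_k for every (∈,∈∨q_k)-fuzzy bi-ideal f of S; (iv) f ∘_k g ≥ f ∧_k g for all (∈,∈∨q_k)-fuzzy quasi-ideals f and g of S; (v) f ∘_k g ≥ f ∧_k g for every (∈,∈∨q_k)-fuzzy quasi-ideal f and every (∈,∈∨q_k)-fuzzy bi-ideal g of S; (vi) f ∘_k g ≥ f ∧_k g for all (∈,∈∨q_k)-fuzzy bi-ideals f and g of S. -/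

import Mathlib

/-- An AG-groupoid: a magma satisfying the left invertive law `(ab)c = (cb)a`. -/
def LeftInvertive (S : Type*) [Mul S] : Prop := ∀ a b c : S, a * b * c = c * b * a

/-- A fuzzy subset: a function into `[0,1]`. -/
def IsFuzzy {S : Type*} (f : S → ℝ) : Prop := ∀ x, 0 ≤ f x ∧ f x ≤ 1

/-- A weakly regular AG-groupoid: each `a` satisfies `a = (ax)(ay)` for some `x, y`. -/
def WeaklyRegular (S : Type*) [Mul S] : Prop := ∀ a : S, ∃ x y : S, a = a * x * (a * y)

/-- The product of fuzzy subsets: `(f ∘ g)(a)` is the supremum of `min(f b, g c)` over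
factorizations `a = b * c` (the empty supremum in `ℝ` is `0`). -/
noncomputable def fuzzyProd {S : Type*} [Mul S] (f g : S → ℝ) (a : S) : ℝ :=
  sSup {v : ℝ | ∃ b c : S, a = b * c ∧ v = min (f b) (g c)}

/-- The constant fuzzy subset `1`. -/
def fuzzyOne (S : Type*) : S → ℝ := fun _ => 1

/-- An `(∈,∈∨q_k)`-fuzzy left ideal of an AG-groupoid. -/
def FuzzyLeftIdealK {S : Type*} [Mul S] (k : ℝ) (f : S → ℝ) : Prop :=
  ∀ x y : S, min (f y) ((1 - k) / 2) ≤ f (x * y)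

/-- An `(∈,∈∨q_k)`-fuzzy right ideal of an AG-groupoid. -/
def FuzzyRightIdealK {S : Type*} [Mul S] (k : ℝ) (f : S → ℝ) : Prop :=
  ∀ x y : S, min (f x) ((1 - k) / 2) ≤ f (x * y)

/-- An `(∈,∈∨q_k)`-fuzzy generalized bi-ideal of an AG-groupoid. -/
def FuzzyGenBiIdealK {S : Type*} [Mul S] (k : ℝ) (f : S → ℝ) : Prop :=
  ∀ x y z : S, min (min (f x) (f z)) ((1 - k) / 2) ≤ f (x * y * z)

/-- An `(∈,∈∨q_k)`-fuzzy bi-ideal of an AG-groupoid. -/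
def FuzzyBiIdealK {S : Type*} [Mul S] (k : ℝ) (f : S → ℝ) : Prop :=
  (∀ x y : S, min (min (f x) (f y)) ((1 - k) / 2) ≤ f (x * y)) ∧
  FuzzyGenBiIdealK k f

/-- An `(∈,∈∨q_k)`-fuzzy quasi-ideal of an AG-groupoid. -/
def FuzzyQuasiIdealK {S : Type*} [Mul S] (k : ℝ) (f : S → ℝ) : Prop :=
  ∀ x : S,
    min (min (fuzzyProd f (fuzzyOne S) x) (fuzzyProd (fuzzyOne S) f x)) ((1 - k) / 2) ≤ f x

/-- `f_k`. -/
noncomputable def subK {S : Type*} (k : ℝ) (f : S → ℝ) : S → ℝ := fun a => min (f a) ((1 - k) / 2)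

/-- `f ∧_k g`. -/
noncomputable def andK {S : Type*} (k : ℝ) (f g : S → ℝ) : S → ℝ :=
  fun a => min (min (f a) (g a)) ((1 - k) / 2)

/-- `f ∘_k g`. -/
noncomputable def prodK {S : Type*} [Mul S] (k : ℝ) (f g : S → ℝ) : S → ℝ :=
  fun a => min (fuzzyProd f g a) ((1 - k) / 2)

/-- A regular AG-groupoid: each `a` satisfies `a = (ax)a` for some `x`. -/
def RegularAG (S : Type*) [Mul S] : Prop := ∀ a : S, ∃ x : S, a = a * x * a

/-- An intra-regular AG-groupoid: each `a` satisfies `a = (x(aa))y` for some `x, y`. -/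
def IntraRegularAG (S : Type*) [Mul S] : Prop :=
  ∀ a : S, ∃ x y : S, a = x * (a * a) * y

/-!
In the presence of a left identity, weak regularity, intra-regularity and solvability of
`a = (aa)z` for every `a` are the same condition. Under it every left multiple of an element is also
a right multiple of it, so fuzzy quasi-ideals are fuzzy bi-ideals, and every `a` factors as
`((au)a)((av)a)`; evaluating two bi-ideals at the two factors bounds `f ∘_k g` from below.
Conversely, `Sa` is a left ideal containing `a`, hence its indicator is both a fuzzy quasi-ideal and
a fuzzy bi-ideal. Each of the five fuzzy conditions, applied to it, makes `a` a product
`(sa)(ta) = (st)(aa)`, which is intra-regularity at `a`.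
-/

namespace LeftInvertive

variable {S : Type*} [Mul S]

theorem medial (hS : LeftInvertive S) (a b c d : S) :
    a * b * (c * d) = a * c * (b * d) := by
  rw [hS a b (c * d), hS c d b, hS (b * d) c a]

theorem weaklyRegular_of_forall_exists_eq_mul_self_mul (hS : LeftInvertive S) {e : S}
    (he : ∀ x : S, e * x = x) (h : ∀ a : S, ∃ z, a = a * a * z) : WeaklyRegular S := by
  intro a
  obtain ⟨z, hz⟩ := h a
  exact ⟨e, z, by rwa [hS.medial, he]⟩

theorem exists_eq_mul_self_mul (hS : LeftInvertive S) (hwr : WeaklyRegular S) (a : S) :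
    ∃ z, a = a * a * z := by
  obtain ⟨x, y, hxy⟩ := hwr a
  exact ⟨x * y, by rwa [← hS.medial]⟩

section LeftIdentity

variable {e : S}

theorem mul_left_comm (hS : LeftInvertive S) (he : ∀ x : S, e * x = x) (a b c : S) :
    a * (b * c) = b * (a * c) := by
  simpa only [he] using hS.medial e a b c

theorem paramedial (hS : LeftInvertive S) (he : ∀ x : S, e * x = x) (a b c d : S) :
    a * b * (c * d) = d * c * (b * a) :=
  calc a * b * (c * d) = c * (a * b * d) := hS.mul_left_comm he _ _ _
    _ = c * (d * b * a) := by rw [hS a b d]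
    _ = d * b * (c * a) := hS.mul_left_comm he _ _ _
    _ = d * c * (b * a) := hS.medial _ _ _ _

theorem mul_mul_self (hS : LeftInvertive S) (he : ∀ x : S, e * x = x) (x a : S) :
    x * (a * a) = a * a * (x * e) := by
  simpa only [he] using hS.paramedial he e x a a

theorem weaklyRegular_of_intraRegularAG (hS : LeftInvertive S) (he : ∀ x : S, e * x = x)
    (hi : IntraRegularAG S) : WeaklyRegular S := by
  refine hS.weaklyRegular_of_forall_exists_eq_mul_self_mul he fun a => ?_
  obtain ⟨x, y, hxy⟩ := hi a
  refine ⟨y * (x * e) * e, ?_⟩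
  calc a = x * (a * a) * y := hxy
    _ = a * a * (x * e) * y := by rw [hS.mul_mul_self he]
    _ = y * (x * e) * (a * a) := hS _ _ _
    _ = a * a * (y * (x * e) * e) := hS.mul_mul_self he _ _

theorem intraRegularAG (hS : LeftInvertive S) (he : ∀ x : S, e * x = x)
    (hwr : WeaklyRegular S) : IntraRegularAG S := by
  intro a
  obtain ⟨z, hz⟩ := hS.exists_eq_mul_self_mul hwr a
  exact ⟨e, z, by rwa [he]⟩

theorem exists_mul_eq_mul_right (hS : LeftInvertive S) (he : ∀ x : S, e * x = x)
    (hwr : WeaklyRegular S) (y a : S) : ∃ w, y * a = a * w := by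
  obtain ⟨z, hz⟩ := hS.exists_eq_mul_self_mul hwr a
  refine ⟨z * y * a, ?_⟩
  calc y * a = y * (a * a * z) := by rw [← hz]
    _ = a * a * (y * z) := hS.mul_left_comm he _ _ _
    _ = z * y * (a * a) := hS.paramedial he _ _ _ _
    _ = a * (z * y * a) := hS.mul_left_comm he _ _ _

theorem regularAG (hS : LeftInvertive S) (he : ∀ x : S, e * x = x)
    (hwr : WeaklyRegular S) : RegularAG S := by
  intro a
  obtain ⟨z, hz⟩ := hS.exists_eq_mul_self_mul hwr a
  obtain ⟨w, hw⟩ := hS.exists_mul_eq_mul_right he hwr z a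
  exact ⟨w, by rwa [← hw, hS z a a]⟩

theorem regularAG_and_intraRegularAG_iff_weaklyRegular (hS : LeftInvertive S)
    (he : ∀ x : S, e * x = x) : RegularAG S ∧ IntraRegularAG S ↔ WeaklyRegular S :=
  ⟨fun h => hS.weaklyRegular_of_intraRegularAG he h.2,
    fun h => ⟨hS.regularAG he h, hS.intraRegularAG he h⟩⟩

theorem exists_eq_sandwich_mul_sandwich (hS : LeftInvertive S) (he : ∀ x : S, e * x = x)
    (hwr : WeaklyRegular S) (a : S) : ∃ u v, a = a * u * a * (a * v * a) := by
  obtain ⟨z, hz⟩ := hS.exists_eq_mul_self_mul hwr a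
  obtain ⟨v, hv⟩ := hS.exists_mul_eq_mul_right he hwr z a
  obtain ⟨u, hu⟩ := hS.exists_mul_eq_mul_right he hwr (v * v) a
  have ha : a = z * a * a := hz.trans (hS _ _ _)
  have hava : a = a * v * a := by rwa [← hv]
  have hza : z * a = a * u * a :=
    calc z * a = z * (a * v * a) := by rw [← hava]
      _ = a * v * (z * a) := hS.mul_left_comm he _ _ _
      _ = a * v * (a * v) := by rw [hv]
      _ = a * a * (v * v) := hS.medial _ _ _ _
      _ = v * v * a * a := hS _ _ _
      _ = a * u * a := by rw [hu]
  exact ⟨u, v, by rwa [← hza, ← hava]⟩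

end LeftIdentity

end LeftInvertive

section FuzzyProd

variable {S : Type*} [Mul S] {f g h : S → ℝ}

theorem min_le_fuzzyProd_mul (hf : BddAbove (Set.range f)) (b c : S) :
    min (f b) (g c) ≤ fuzzyProd f g (b * c) := by
  refine le_csSup ?_ ⟨b, c, rfl, rfl⟩
  obtain ⟨M, hM⟩ := hf
  refine ⟨M, ?_⟩
  rintro _ ⟨x, y, -, rfl⟩
  exact (min_le_left _ _).trans (hM ⟨x, rfl⟩)

-- For `r < 0` this fails when `a` admits no factorization, as then `fuzzyProd f g a = 0`.
theorem exists_lt_min_of_lt_fuzzyProd {r : ℝ} (hr : 0 ≤ r) {a : S} (hlt : r < fuzzyProd f g a) :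
    ∃ b c, a = b * c ∧ r < min (f b) (g c) := by
  by_contra! hle
  refine hlt.not_ge (Real.sSup_le ?_ hr)
  rintro _ ⟨b, c, hbc, rfl⟩
  exact hle b c hbc

theorem min_fuzzyProd_le {t : ℝ} {a : S} (ha : 0 ≤ h a)
    (hmul : ∀ b c, min (min (f b) (g c)) t ≤ h (b * c)) : min (fuzzyProd f g a) t ≤ h a := by
  by_contra! hlt
  obtain ⟨hprod, ht⟩ := lt_min_iff.1 hlt
  obtain ⟨b, c, rfl, hbc⟩ := exists_lt_min_of_lt_fuzzyProd ha hprod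
  exact (lt_min hbc ht).not_ge (hmul b c)

end FuzzyProd

section FuzzyIdeals

variable {S : Type*} {f g : S → ℝ} {k : ℝ}

theorem IsFuzzy.bddAbove_range (hf : IsFuzzy f) : BddAbove (Set.range f) :=
  ⟨1, Set.forall_mem_range.2 fun x => (hf x).2⟩

theorem isFuzzy_fuzzyOne : IsFuzzy (fuzzyOne S) := fun _ => ⟨zero_le_one, le_rfl⟩

theorem isFuzzy_indicator_one (A : Set S) : IsFuzzy (A.indicator 1) := fun x =>
  ⟨Set.indicator_nonneg (fun _ _ => zero_le_one) x,
    Set.indicator_le_self' (fun _ _ => zero_le_one) x⟩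

theorem andK_self (k : ℝ) (f : S → ℝ) : andK k f f = subK k f :=
  funext fun _ => congrArg (min · _) (min_self _)

variable [Mul S]

theorem prodK_self_le_subK (hf : IsFuzzy f)
    (hmul : ∀ x y : S, min (min (f x) (f y)) ((1 - k) / 2) ≤ f (x * y)) :
    prodK k f f ≤ subK k f := fun a =>
  le_min (min_fuzzyProd_le (hf a).1 hmul) (min_le_right _ _)

theorem FuzzyLeftIdealK.fuzzyBiIdealK (hl : FuzzyLeftIdealK k f) : FuzzyBiIdealK k f :=
  ⟨fun x y => (min_le_min_right _ (min_le_right _ _)).trans (hl x y),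
    fun x y z => (min_le_min_right _ (min_le_right _ _)).trans (hl (x * y) z)⟩

theorem FuzzyLeftIdealK.fuzzyQuasiIdealK (hf : IsFuzzy f) (hl : FuzzyLeftIdealK k f) :
    FuzzyQuasiIdealK k f := fun x =>
  (min_le_min_right _ (min_le_right _ _)).trans <|
    min_fuzzyProd_le (hf x).1 fun y z => (min_le_min_right _ (min_le_right _ _)).trans (hl y z)

theorem fuzzyLeftIdealK_indicator_one {A : Set S} (hA : ∀ x, ∀ y ∈ A, x * y ∈ A) (k : ℝ) :
    FuzzyLeftIdealK k (A.indicator (1 : S → ℝ)) := by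
  intro x y
  by_cases hy : y ∈ A
  · rw [Set.indicator_of_mem hy, Set.indicator_of_mem (hA x y hy)]
    exact min_le_left _ _
  · rw [Set.indicator_of_notMem hy]
    exact (min_le_left _ _).trans (isFuzzy_indicator_one A _).1

namespace LeftInvertive

variable {e : S}

theorem fuzzyBiIdealK_of_fuzzyQuasiIdealK (hS : LeftInvertive S) (he : ∀ x : S, e * x = x)
    (hwr : WeaklyRegular S) (hf : IsFuzzy f) (hq : FuzzyQuasiIdealK k f) :
    FuzzyBiIdealK k f := by
  have le_prod_one (x y : S) : f x ≤ fuzzyProd f (fuzzyOne S) (x * y) :=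
    (le_min le_rfl (hf x).2).trans (min_le_fuzzyProd_mul (g := fuzzyOne S) hf.bddAbove_range x y)
  have le_one_prod (x y : S) : f y ≤ fuzzyProd (fuzzyOne S) f (x * y) :=
    (le_min (hf y).2 le_rfl).trans (min_le_fuzzyProd_mul isFuzzy_fuzzyOne.bddAbove_range x y)
  refine ⟨fun x y => ?_, fun x y z => ?_⟩
  · exact (min_le_min_right _ (min_le_min (le_prod_one x y) (le_one_prod x y))).trans (hq _)
  · refine (min_le_min_right _ (min_le_min ?_ (le_one_prod (x * y) z))).trans (hq _)
    obtain ⟨w, hw⟩ := hS.exists_mul_eq_mul_right he hwr (z * y) x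
    rw [hS x y z, hw]
    exact le_prod_one x w

theorem andK_le_prodK (hS : LeftInvertive S) (he : ∀ x : S, e * x = x)
    (hwr : WeaklyRegular S) (hf : BddAbove (Set.range f)) (hbf : FuzzyGenBiIdealK k f)
    (hbg : FuzzyGenBiIdealK k g) : andK k f g ≤ prodK k f g := by
  intro a
  obtain ⟨u, v, hauv⟩ := hS.exists_eq_sandwich_mul_sandwich he hwr a
  have hfa : andK k f g a ≤ f (a * u * a) :=
    (min_le_min_right _ (le_min (min_le_left _ _) (min_le_left _ _))).trans (hbf a u a)
  have hga : andK k f g a ≤ g (a * v * a) :=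
    (min_le_min_right _ (le_min (min_le_right _ _) (min_le_right _ _))).trans (hbg a v a)
  have hprod : min (f (a * u * a)) (g (a * v * a)) ≤ fuzzyProd f g a :=
    (min_le_fuzzyProd_mul hf _ _).trans_eq (congrArg _ hauv.symm)
  exact le_min ((le_min hfa hga).trans hprod) (min_le_right _ _)

theorem prodK_self_eq_subK (hS : LeftInvertive S) (he : ∀ x : S, e * x = x)
    (hwr : WeaklyRegular S) (hf : IsFuzzy f) (hb : FuzzyBiIdealK k f) :
    prodK k f f = subK k f :=
  (prodK_self_le_subK hf hb.1).antisymm <|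
    (andK_self k f).symm.trans_le (hS.andK_le_prodK he hwr hf.bddAbove_range hb.2 hb.2)

theorem mul_mem_range_mul_right (hS : LeftInvertive S) (he : ∀ x : S, e * x = x) (a x : S) :
    ∀ y ∈ Set.range (· * a), x * y ∈ Set.range (· * a) := by
  rintro _ ⟨s, rfl⟩
  refine ⟨x * e * s, ?_⟩
  calc x * e * s * a = a * s * (x * e) := hS _ _ _
    _ = e * x * (s * a) := hS.paramedial he _ _ _ _
    _ = x * (s * a) := by rw [he]

theorem weaklyRegular_of_subK_le_prodK_self (hS : LeftInvertive S) (he : ∀ x : S, e * x = x)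
    (hk : k < 1)
    (h : ∀ f : S → ℝ, IsFuzzy f → FuzzyLeftIdealK k f → subK k f ≤ prodK k f f) :
    WeaklyRegular S := by
  refine hS.weaklyRegular_of_forall_exists_eq_mul_self_mul he fun a => ?_
  set f : S → ℝ := (Set.range (· * a)).indicator 1
  have hfa : f a = 1 := Set.indicator_of_mem (Set.mem_range.2 ⟨e, he a⟩) 1
  have hle : subK k f a ≤ prodK k f f a :=
    h f (isFuzzy_indicator_one _)
      (fuzzyLeftIdealK_indicator_one (hS.mul_mem_range_mul_right he a) k) a
  have hpos : 0 < subK k f a := lt_min (hfa ▸ one_pos) (half_pos (sub_pos.2 hk))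
  have hprod : 0 < fuzzyProd f f a := (hpos.trans_le hle).trans_le (min_le_left _ _)
  obtain ⟨b, c, hbc, hfbc⟩ := exists_lt_min_of_lt_fuzzyProd le_rfl hprod
  obtain ⟨hfb, hfc⟩ := lt_min_iff.1 hfbc
  obtain ⟨s, rfl⟩ := Set.mem_of_indicator_ne_zero hfb.ne'
  obtain ⟨t, rfl⟩ := Set.mem_of_indicator_ne_zero hfc.ne'
  refine ⟨s * t * e, ?_⟩
  calc a = s * a * (t * a) := hbc
    _ = s * t * (a * a) := hS.medial _ _ _ _
    _ = a * a * (s * t * e) := hS.mul_mul_self he _ _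

end LeftInvertive

end FuzzyIdeals

theorem regular_and_intraRegular_tfae_general {S : Type*} [Mul S] (hS : LeftInvertive S)
    {e : S} (he : ∀ x : S, e * x = x) {k : ℝ} (hk : k < 1) :
    [RegularAG S ∧ IntraRegularAG S,
      ∀ f : S → ℝ, IsFuzzy f → FuzzyQuasiIdealK k f → prodK k f f = subK k f,
      ∀ f : S → ℝ, IsFuzzy f → FuzzyBiIdealK k f → prodK k f f = subK k f,
      ∀ f g : S → ℝ, IsFuzzy f → IsFuzzy g → FuzzyQuasiIdealK k f → FuzzyQuasiIdealK k g →
        ∀ a : S, andK k f g a ≤ prodK k f g a,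
      ∀ f g : S → ℝ, IsFuzzy f → IsFuzzy g → FuzzyQuasiIdealK k f → FuzzyBiIdealK k g →
        ∀ a : S, andK k f g a ≤ prodK k f g a,
      ∀ f g : S → ℝ, IsFuzzy f → IsFuzzy g → FuzzyBiIdealK k f → FuzzyBiIdealK k g →
        ∀ a : S, andK k f g a ≤ prodK k f g a].TFAE := by
  rw [hS.regularAG_and_intraRegularAG_iff_weaklyRegular he]
  have bi (hwr : WeaklyRegular S) {f : S → ℝ} (hf : IsFuzzy f) (hq : FuzzyQuasiIdealK k f) :
      FuzzyBiIdealK k f := hS.fuzzyBiIdealK_of_fuzzyQuasiIdealK he hwr hf hq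
  have le (hwr : WeaklyRegular S) {f g : S → ℝ} (hf : IsFuzzy f) (hbf : FuzzyBiIdealK k f)
      (hbg : FuzzyBiIdealK k g) : andK k f g ≤ prodK k f g :=
    hS.andK_le_prodK he hwr hf.bddAbove_range hbf.2 hbg.2
  have of_leftIdeals := hS.weaklyRegular_of_subK_le_prodK_self he hk
  tfae_have 1 → 2 := fun hwr f hf hq => hS.prodK_self_eq_subK he hwr hf (bi hwr hf hq)
  tfae_have 1 → 3 := fun hwr f hf hb => hS.prodK_self_eq_subK he hwr hf hb
  tfae_have 1 → 4 := fun hwr f g hf hg hqf hqg => le hwr hf (bi hwr hf hqf) (bi hwr hg hqg)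
  tfae_have 1 → 5 := fun hwr f g hf _ hqf hbg => le hwr hf (bi hwr hf hqf) hbg
  tfae_have 1 → 6 := fun hwr f g hf _ hbf hbg => le hwr hf hbf hbg
  tfae_have 2 → 1 := fun h => of_leftIdeals fun f hf hl => (h f hf (hl.fuzzyQuasiIdealK hf)).ge
  tfae_have 3 → 1 := fun h => of_leftIdeals fun f hf hl => (h f hf hl.fuzzyBiIdealK).ge
  tfae_have 4 → 1 := fun h => of_leftIdeals fun f hf hl => andK_self k f ▸
    h f f hf hf (hl.fuzzyQuasiIdealK hf) (hl.fuzzyQuasiIdealK hf)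
  tfae_have 5 → 1 := fun h => of_leftIdeals fun f hf hl => andK_self k f ▸
    h f f hf hf (hl.fuzzyQuasiIdealK hf) hl.fuzzyBiIdealK
  tfae_have 6 → 1 := fun h => of_leftIdeals fun f hf hl => andK_self k f ▸
    h f f hf hf hl.fuzzyBiIdealK hl.fuzzyBiIdealK
  tfae_finish


/-- for a weakly regular AG-groupoid `S` with left identity, the following
are equivalent: (i) `S` is regular and intra-regular; (ii) `f ∘_k f = f_k` for every
`(∈,∈∨q_k)`-fuzzy quasi-ideal `f`; (iii) `f ∘_k f = f_k` for every
`(∈,∈∨q_k)`-fuzzy bi-ideal `f`; (iv) `f ∘_k g ≥ f ∧_k g` for all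
`(∈,∈∨q_k)`-fuzzy quasi-ideals `f, g`; (v) `f ∘_k g ≥ f ∧_k g` for every
`(∈,∈∨q_k)`-fuzzy quasi-ideal `f` and every `(∈,∈∨q_k)`-fuzzy bi-ideal `g`;
(vi) `f ∘_k g ≥ f ∧_k g` for all `(∈,∈∨q_k)`-fuzzy bi-ideals `f, g`. -/
theorem regular_and_intraRegular_tfae {S : Type*} [Mul S] (hS : LeftInvertive S)
    (k : ℝ) (hk0 : 0 ≤ k) (hk1 : k < 1)
    (e : S) (he : ∀ x : S, e * x = x) (hwr : WeaklyRegular S) :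
    ((RegularAG S ∧ IntraRegularAG S) ↔
      ∀ f : S → ℝ, IsFuzzy f → FuzzyQuasiIdealK k f → prodK k f f = subK k f) ∧
    ((RegularAG S ∧ IntraRegularAG S) ↔
      ∀ f : S → ℝ, IsFuzzy f → FuzzyBiIdealK k f → prodK k f f = subK k f) ∧
    ((RegularAG S ∧ IntraRegularAG S) ↔
      ∀ f g : S → ℝ, IsFuzzy f → IsFuzzy g →
        FuzzyQuasiIdealK k f → FuzzyQuasiIdealK k g →
        ∀ a : S, andK k f g a ≤ prodK k f g a) ∧
    ((RegularAG S ∧ IntraRegularAG S) ↔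
      ∀ f g : S → ℝ, IsFuzzy f → IsFuzzy g →
        FuzzyQuasiIdealK k f → FuzzyBiIdealK k g →
        ∀ a : S, andK k f g a ≤ prodK k f g a) ∧
    ((RegularAG S ∧ IntraRegularAG S) ↔
      ∀ f g : S → ℝ, IsFuzzy f → IsFuzzy g →
        FuzzyBiIdealK k f → FuzzyBiIdealK k g →
        ∀ a : S, andK k f g a ≤ prodK k f g a) := by
  have h := regular_and_intraRegular_tfae_general hS he hk1
  exact ⟨h.out 0 1, h.out 0 2, h.out 0 3, h.out 0 4, h.out 0 5⟩
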